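/- arXiv:1807.07829 — 3 statements merged into one kernel-verified Lean document; each statement's English description precedes it below -/
import Mathlib

section
/- Let Z_Q be the set of values Σ_{x=1}^N Σ_{a=1}^d Tr((|ψ_x^a⟩⟨ψ_x^a| ⊗ |φ_x^a⟩⟨φ_x^a|) ρ) as ρ ranges over all density matrices on ℂ^{d·d} and, for each x, {ψ_x^a : a = 1,…,d} ranges over all orthonormal bases of ℂ^d (Alice's measurements), with Bob's orthonormal bases {φ_x^a} held fixed; and let Z_E be the set of values S_E := Σ_{x=1}^N Σ_{a=1}^d Σ_{λ∈Λ} p(λ) p_λ(a|x) ⟨φ_x^a, σ_λ φ_x^a⟩ over all local-hidden-state models. Then sup Z_Q ≥ (N / s_N^B) · sup Z_E; in particular the maximal quantum value of the steering functional exceeds the maximal LHS value by a factor of at least N / s_N^B. -/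
/-!
The bound splits as `sup Z_E ≤ s_N^B` and `N ≤ sup Z_Q`.

An LHS value is affine in the distribution of the hidden variable and in Alice's responses, so it is
dominated by the value of one hidden state `σ` with deterministic responses `x ↦ f x`. That value is
`tr (A σ)`, where `A` is the sum of the `N` distinct projectors `|φ_x^{f x}⟩⟨φ_x^{f x}|`, and
`tr (A σ) ≤ ‖A‖`.

On the quantum side, Alice measures the complex conjugates of Bob's bases on the maximally entangled
state `Φ`. Since `⟨Φ| X ⊗ Y |Φ⟩ = tr (Y Xᵀ) / d`, each of the `N d` terms equals `1 / d`.
-/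


open scoped ComplexOrder

noncomputable section

/-- `|v⟩⟨v|`, the rank-one projection matrix associated with the vector `v`. -/
def rankOneProj {n : Type*} [Fintype n] (v : n → ℂ) : Matrix n n ℂ :=
  Matrix.vecMulVec v (star v)

/-- The operator (spectral) norm of a complex matrix. -/
def opNorm {n : Type*} [Fintype n] [DecidableEq n] (M : Matrix n n ℂ) : ℝ :=
  ‖Matrix.toEuclideanCLM (𝕜 := ℂ) (n := n) M‖

/-- A density matrix: positive semidefinite with unit trace. -/
def IsDensityMatrix {n : Type*} [Fintype n] [DecidableEq n] (ρ : Matrix n n ℂ) : Prop :=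
  ρ.PosSemidef ∧ ρ.trace = 1

/-- Orthonormality of a family of `d` vectors in `ℂ^d` (for each measurement setting). -/
def IsONBFamily {N d : ℕ} (φ : Fin N → Fin d → (Fin d → ℂ)) : Prop :=
  ∀ x a b, (∑ i, (starRingEnd ℂ) (φ x a i) * φ x b i) = if a = b then 1 else 0

/-- `s_k^B` : the maximal operator norm of a sum of `k` distinct projectors
`|φ_x^a⟩⟨φ_x^a|` drawn from the measurement eigenvectors `φ`. -/
def sMax {N d : ℕ} (φ : Fin N → Fin d → (Fin d → ℂ)) (k : ℕ) : ℝ :=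
  sSup { r : ℝ | ∃ T : Finset (Fin N × Fin d), T.card = k ∧
    r = opNorm (∑ q ∈ T, rankOneProj (φ q.1 q.2)) }

open scoped Matrix Kronecker

section Matrices

variable {m n : Type*} [Fintype m] [Fintype n]

lemma opNorm_nonneg [DecidableEq n] (A : Matrix n n ℂ) : 0 ≤ opNorm A := norm_nonneg _

lemma dotProduct_star_eq_norm_sq (v : n → ℂ) :
    v ⬝ᵥ star v = ((‖WithLp.toLp 2 v‖ ^ 2 : ℝ) : ℂ) := by
  rw [← EuclideanSpace.inner_toLp_toLp, inner_self_eq_norm_sq_to_K, Complex.ofReal_pow]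
  rfl

lemma trace_rankOneProj (v : n → ℂ) :
    (rankOneProj v).trace = ((‖WithLp.toLp 2 v‖ ^ 2 : ℝ) : ℂ) := by
  rw [rankOneProj, Matrix.trace_vecMulVec, dotProduct_star_eq_norm_sq]

lemma rankOneProj_mul_rankOneProj (v : n → ℂ) :
    rankOneProj v * rankOneProj v = ((‖WithLp.toLp 2 v‖ ^ 2 : ℝ) : ℂ) • rankOneProj v := by
  rw [rankOneProj, Matrix.vecMulVec_mul_vecMulVec, dotProduct_comm, dotProduct_star_eq_norm_sq,
    Matrix.vecMulVec_smul]

lemma transpose_rankOneProj (v : n → ℂ) : (rankOneProj v)ᵀ = rankOneProj (star v) := by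
  rw [rankOneProj, Matrix.transpose_vecMulVec, rankOneProj, star_star]

lemma rankOneProj_kronecker_rankOneProj (v : m → ℂ) (w : n → ℂ) :
    rankOneProj v ⊗ₖ rankOneProj w = rankOneProj fun q : m × n ↦ v q.1 * w q.2 := by
  ext
  simp only [rankOneProj, Matrix.kroneckerMap_apply, Matrix.vecMulVec_apply, Pi.star_apply,
    star_mul']
  ring

lemma norm_toLp_mul (v : m → ℂ) (w : n → ℂ) :
    ‖WithLp.toLp 2 fun q : m × n ↦ v q.1 * w q.2‖ = ‖WithLp.toLp 2 v‖ * ‖WithLp.toLp 2 w‖ := by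
  rw [← sq_eq_sq₀ (by positivity) (by positivity), mul_pow]
  simp only [EuclideanSpace.norm_sq_eq, norm_mul, mul_pow, Fintype.sum_prod_type,
    Finset.sum_mul_sum]

lemma opNorm_rankOneProj [DecidableEq n] (v : n → ℂ) :
    opNorm (rankOneProj v) = ‖WithLp.toLp 2 v‖ ^ 2 := by
  have h : Matrix.toEuclideanCLM (𝕜 := ℂ) (n := n) (rankOneProj v) =
      InnerProductSpace.rankOne ℂ (WithLp.toLp 2 v) (WithLp.toLp 2 v) := by
    ext w i
    simp [rankOneProj, Matrix.vecMulVec_mulVec, dotProduct_comm, mul_comm,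
      EuclideanSpace.inner_eq_star_dotProduct]
  rw [opNorm, h, InnerProductSpace.norm_rankOne, sq]

lemma norm_trace_mul_rankOneProj_le [DecidableEq n] (A : Matrix n n ℂ) (v : n → ℂ) :
    ‖(A * rankOneProj v).trace‖ ≤ opNorm A * ‖WithLp.toLp 2 v‖ ^ 2 := by
  set u := WithLp.toLp 2 v
  have h : (A * rankOneProj v).trace = inner ℂ u (Matrix.toEuclideanCLM (𝕜 := ℂ) (n := n) A u) := by
    rw [rankOneProj, Matrix.mul_vecMulVec, Matrix.trace_vecMulVec,
      EuclideanSpace.inner_eq_star_dotProduct, Matrix.ofLp_toEuclideanCLM]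
  calc ‖(A * rankOneProj v).trace‖ ≤ ‖u‖ * ‖Matrix.toEuclideanCLM (𝕜 := ℂ) (n := n) A u‖ :=
        h ▸ norm_inner_le_norm _ _
    _ ≤ ‖u‖ * (opNorm A * ‖u‖) := by gcongr; exact ContinuousLinearMap.le_opNorm _ _
    _ = opNorm A * ‖u‖ ^ 2 := by ring

lemma norm_trace_mul_le_opNorm_mul_trace [DecidableEq n] (A : Matrix n n ℂ) {ρ : Matrix n n ℂ}
    (hρ : ρ.PosSemidef) : ‖(A * ρ).trace‖ ≤ opNorm A * ρ.trace.re := by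
  obtain ⟨k, v, hv⟩ := Matrix.posSemidef_iff_eq_sum_vecMulVec.mp hρ
  replace hv : ρ = ∑ i, rankOneProj (v i) := hv
  calc ‖(A * ρ).trace‖ ≤ ∑ i, ‖(A * rankOneProj (v i)).trace‖ := by
        rw [hv, Finset.mul_sum, Matrix.trace_sum]
        exact norm_sum_le _ _
    _ ≤ ∑ i, opNorm A * ‖WithLp.toLp 2 (v i)‖ ^ 2 :=
        Finset.sum_le_sum fun i _ ↦ norm_trace_mul_rankOneProj_le A (v i)
    _ = opNorm A * ρ.trace.re := by
        simp only [hv, Matrix.trace_sum, trace_rankOneProj, Complex.re_sum, Complex.ofReal_re,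
          Finset.mul_sum]

lemma IsDensityMatrix.re_trace_mul_le_opNorm [DecidableEq n] {ρ : Matrix n n ℂ}
    (hρ : IsDensityMatrix ρ) (A : Matrix n n ℂ) : (A * ρ).trace.re ≤ opNorm A := by
  simpa [hρ.2] using (Complex.re_le_norm _).trans (norm_trace_mul_le_opNorm_mul_trace A hρ.1)

end Matrices

section MaximallyEntangled

variable (n : Type*) [Fintype n] [DecidableEq n]

/-- The maximally entangled state `|Φ⟩⟨Φ|` on `ℂ^n ⊗ ℂ^n`, where `Φ = |n|^{-1/2} ∑ i, e_i ⊗ e_i`.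
The unnormalised vector `∑ i, e_i ⊗ e_i` is encoded as the vectorisation of the identity matrix. -/
def maxEntangledState : Matrix (n × n) (n × n) ℂ :=
  (Fintype.card n : ℂ)⁻¹ • rankOneProj (Matrix.vec 1)

variable {n}

lemma trace_kronecker_mul_maxEntangledState (A B : Matrix n n ℂ) :
    ((A ⊗ₖ B) * maxEntangledState n).trace = (Fintype.card n : ℂ)⁻¹ * (B * Aᵀ).trace := by
  rw [maxEntangledState, rankOneProj, Matrix.mul_smul, Matrix.trace_smul, Matrix.mul_vecMulVec,
    Matrix.trace_vecMulVec, Matrix.kronecker_mulVec_vec, dotProduct_comm,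
    Matrix.star_vec_dotProduct_vec, Matrix.conjTranspose_one, one_mul, mul_one, smul_eq_mul]

lemma isDensityMatrix_maxEntangledState [Nonempty n] : IsDensityMatrix (maxEntangledState n) := by
  refine ⟨(Matrix.posSemidef_vecMulVec_self_star _).smul (by positivity), ?_⟩
  simpa using trace_kronecker_mul_maxEntangledState (1 : Matrix n n ℂ) 1

lemma trace_conj_kronecker_self_mul_maxEntangledState {v : n → ℂ} (hv : ‖WithLp.toLp 2 v‖ = 1) :
    ((rankOneProj (star v) ⊗ₖ rankOneProj v) * maxEntangledState n).trace =
      (Fintype.card n : ℂ)⁻¹ := by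
  rw [trace_kronecker_mul_maxEntangledState, transpose_rankOneProj, star_star,
    rankOneProj_mul_rankOneProj, Matrix.trace_smul, trace_rankOneProj, hv]
  simp

end MaximallyEntangled

lemma exists_sum_mul_le {ι : Type*} [Fintype ι] {w : ι → ℝ} (hw : ∀ i, 0 ≤ w i)
    (hw1 : ∑ i, w i = 1) (t : ι → ℝ) : ∃ j, ∑ i, w i * t i ≤ t j := by
  have hconv := convexOn_id (𝕜 := ℝ) (convex_univ (E := ℝ))
  obtain ⟨j, -, hj⟩ := hconv.exists_ge_of_centerMass (t := Finset.univ) (p := t)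
    (fun i _ ↦ hw i) (hw1 ▸ one_pos) (fun _ _ ↦ Set.mem_univ _)
  exact ⟨j, by simpa [Finset.centerMass_eq_of_sum_1 _ _ hw1] using hj⟩

section Steering

variable {N d : ℕ} {φ ψ : Fin N → Fin d → Fin d → ℂ}

lemma IsONBFamily.norm_eq_one (hφ : IsONBFamily φ) (x : Fin N) (a : Fin d) :
    ‖WithLp.toLp 2 (φ x a)‖ = 1 := by
  have h : ((‖WithLp.toLp 2 (φ x a)‖ ^ 2 : ℝ) : ℂ) = 1 := by
    rw [← dotProduct_star_eq_norm_sq, dotProduct_comm]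
    exact (hφ x a a).trans (if_pos rfl)
  exact (pow_eq_one_iff_of_nonneg (norm_nonneg _) two_ne_zero).mp (by exact_mod_cast h)

lemma IsONBFamily.star (hφ : IsONBFamily φ) : IsONBFamily fun x a ↦ star (φ x a) := by
  intro x a b
  simpa [apply_ite] using congrArg (starRingEnd ℂ) (hφ x a b)

lemma sMax_nonneg (φ : Fin N → Fin d → Fin d → ℂ) (k : ℕ) : 0 ≤ sMax φ k := by
  refine Real.sSup_nonneg ?_
  rintro _ ⟨T, -, rfl⟩
  exact opNorm_nonneg _

lemma opNorm_sum_rankOneProj_le_sMax (φ : Fin N → Fin d → Fin d → ℂ)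
    (T : Finset (Fin N × Fin d)) :
    opNorm (∑ q ∈ T, rankOneProj (φ q.1 q.2)) ≤ sMax φ T.card := by
  refine le_csSup (Set.Finite.bddAbove ?_) ⟨T, rfl, rfl⟩
  refine (Set.finite_range fun T : Finset (Fin N × Fin d) ↦
    opNorm (∑ q ∈ T, rankOneProj (φ q.1 q.2))).subset ?_
  rintro _ ⟨T, -, rfl⟩
  exact Set.mem_range_self T

lemma opNorm_sum_rankOneProj_graph_le_sMax (φ : Fin N → Fin d → Fin d → ℂ) (f : Fin N → Fin d) :
    opNorm (∑ x, rankOneProj (φ x (f x))) ≤ sMax φ N := by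
  let graph : Fin N ↪ Fin N × Fin d := ⟨fun x ↦ (x, f x), fun _ _ h ↦ congrArg Prod.fst h⟩
  have h := opNorm_sum_rankOneProj_le_sMax φ (Finset.univ.map graph)
  rwa [Finset.sum_map, Finset.card_map, Finset.card_univ, Fintype.card_fin] at h

lemma sum_response_mul_re_trace_le_sMax (φ : Fin N → Fin d → Fin d → ℂ) {r : Fin N → Fin d → ℝ}
    (hr : ∀ x a, 0 ≤ r x a) (hr1 : ∀ x, ∑ a, r x a = 1) {σ : Matrix (Fin d) (Fin d) ℂ}
    (hσ : IsDensityMatrix σ) :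
    ∑ x, ∑ a, r x a * (rankOneProj (φ x a) * σ).trace.re ≤ sMax φ N := by
  choose f hf using fun x ↦
    exists_sum_mul_le (hr x) (hr1 x) fun a ↦ (rankOneProj (φ x a) * σ).trace.re
  calc ∑ x, ∑ a, r x a * (rankOneProj (φ x a) * σ).trace.re
      ≤ ∑ x, (rankOneProj (φ x (f x)) * σ).trace.re := Finset.sum_le_sum fun x _ ↦ hf x
    _ = ((∑ x, rankOneProj (φ x (f x))) * σ).trace.re := by
        rw [Finset.sum_mul, Matrix.trace_sum, Complex.re_sum]
    _ ≤ opNorm (∑ x, rankOneProj (φ x (f x))) := hσ.re_trace_mul_le_opNorm _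
    _ ≤ sMax φ N := opNorm_sum_rankOneProj_graph_le_sMax φ f

/-- The value `S_E` of the steering functional for the local-hidden-state model with distribution
`p`, response probabilities `resp` and hidden states `σ`. -/
def lhsValue {Λ : Type*} [Fintype Λ] (φ : Fin N → Fin d → Fin d → ℂ) (p : Λ → ℝ)
    (resp : Λ → Fin N → Fin d → ℝ) (σ : Λ → Matrix (Fin d) (Fin d) ℂ) : ℝ :=
  ∑ x, ∑ a, ∑ l, p l * resp l x a * (rankOneProj (φ x a) * σ l).trace.re

lemma lhsValue_eq_sum_mul {Λ : Type*} [Fintype Λ] (φ : Fin N → Fin d → Fin d → ℂ) (p : Λ → ℝ)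
    (resp : Λ → Fin N → Fin d → ℝ) (σ : Λ → Matrix (Fin d) (Fin d) ℂ) :
    lhsValue φ p resp σ =
      ∑ l, p l * ∑ x, ∑ a, resp l x a * (rankOneProj (φ x a) * σ l).trace.re := by
  simp only [lhsValue, Finset.mul_sum, mul_assoc]
  rw [Finset.sum_comm_cycle]

lemma lhsValue_le_sMax {Λ : Type*} [Fintype Λ] (φ : Fin N → Fin d → Fin d → ℂ) {p : Λ → ℝ}
    {resp : Λ → Fin N → Fin d → ℝ} {σ : Λ → Matrix (Fin d) (Fin d) ℂ} (hp : ∀ l, 0 ≤ p l)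
    (hp1 : ∑ l, p l = 1) (hr : ∀ l x a, 0 ≤ resp l x a) (hr1 : ∀ l x, ∑ a, resp l x a = 1)
    (hσ : ∀ l, IsDensityMatrix (σ l)) : lhsValue φ p resp σ ≤ sMax φ N := by
  rw [lhsValue_eq_sum_mul]
  obtain ⟨l, hl⟩ := exists_sum_mul_le hp hp1
    fun l ↦ ∑ x, ∑ a, resp l x a * (rankOneProj (φ x a) * σ l).trace.re
  exact hl.trans (sum_response_mul_re_trace_le_sMax φ (hr l) (hr1 l) (hσ l))

/-- The value `S_Q` of the steering functional when Alice measures the bases `ψ` and Bob the bases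
`φ` on the shared state `ρ`. -/
def quantumValue (φ ψ : Fin N → Fin d → Fin d → ℂ)
    (ρ : Matrix (Fin d × Fin d) (Fin d × Fin d) ℂ) : ℝ :=
  ∑ x, ∑ a, ((rankOneProj (ψ x a) ⊗ₖ rankOneProj (φ x a)) * ρ).trace.re

lemma quantumValue_le (hφ : IsONBFamily φ) (hψ : IsONBFamily ψ)
    {ρ : Matrix (Fin d × Fin d) (Fin d × Fin d) ℂ} (hρ : IsDensityMatrix ρ) :
    quantumValue φ ψ ρ ≤ N * d := by
  have hterm (x : Fin N) (a : Fin d) :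
      ((rankOneProj (ψ x a) ⊗ₖ rankOneProj (φ x a)) * ρ).trace.re ≤ 1 := by
    refine (hρ.re_trace_mul_le_opNorm _).trans_eq ?_
    rw [rankOneProj_kronecker_rankOneProj, opNorm_rankOneProj, norm_toLp_mul, hψ.norm_eq_one,
      hφ.norm_eq_one, one_mul, one_pow]
  calc quantumValue φ ψ ρ ≤ ∑ _x : Fin N, ∑ _a : Fin d, (1 : ℝ) :=
        Finset.sum_le_sum fun x _ ↦ Finset.sum_le_sum fun a _ ↦ hterm x a
    _ = N * d := by simp

lemma quantumValue_star_maxEntangledState [NeZero d] (hφ : IsONBFamily φ) :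
    quantumValue φ (fun x a ↦ star (φ x a)) (maxEntangledState (Fin d)) = N := by
  simp [quantumValue, trace_conj_kronecker_self_mul_maxEntangledState (hφ.norm_eq_one _ _)]

end Steering

/-- **Corollary (violation of the steering inequality).**
The maximal quantum value of the steering functional exceeds the maximal LHS
value by a factor of at least `N / s_N^B`. -/
theorem steering_violation
    (N d : ℕ) (hN : 1 ≤ N) (hd : 1 ≤ d)
    (φ : Fin N → Fin d → (Fin d → ℂ)) (hφ : IsONBFamily φ)
    (ZQ ZE : Set ℝ)
    (hZQ : ZQ = { r : ℝ | ∃ ψ : Fin N → Fin d → (Fin d → ℂ), IsONBFamily ψ ∧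
      ∃ ρ : Matrix (Fin d × Fin d) (Fin d × Fin d) ℂ, IsDensityMatrix ρ ∧
        r = ∑ x, ∑ a, (Matrix.trace
          (Matrix.kroneckerMap (· * ·) (rankOneProj (ψ x a)) (rankOneProj (φ x a)) * ρ)).re })
    (hZE : ZE = { r : ℝ | ∃ (Λ : Type) (_ : Fintype Λ) (p : Λ → ℝ)
        (resp : Λ → Fin N → Fin d → ℝ) (σ : Λ → Matrix (Fin d) (Fin d) ℂ),
      (∀ l, 0 ≤ p l) ∧ (∑ l, p l = 1) ∧
      (∀ l x a, 0 ≤ resp l x a ∧ resp l x a ≤ 1) ∧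
      (∀ l x, ∑ a, resp l x a = 1) ∧
      (∀ l, IsDensityMatrix (σ l)) ∧
      r = ∑ x, ∑ a, ∑ l, p l * resp l x a *
        (Matrix.trace (rankOneProj (φ x a) * σ l)).re }) :
    ((N : ℝ) / sMax φ N) * sSup ZE ≤ sSup ZQ := by
  have : NeZero d := ⟨Nat.one_le_iff_ne_zero.mp hd⟩
  have hE : sSup ZE ≤ sMax φ N := by
    refine Real.sSup_le ?_ (sMax_nonneg φ N)
    rw [hZE]
    rintro _ ⟨Λ, _, p, resp, σ, hp, hp1, hr, hr1, hσ, rfl⟩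
    exact lhsValue_le_sMax φ hp hp1 (fun l x a ↦ (hr l x a).1) hr1 hσ
  have hQ : (N : ℝ) ≤ sSup ZQ := by
    rw [hZQ]
    refine le_csSup ⟨N * d, ?_⟩ ⟨_, hφ.star, _, isDensityMatrix_maxEntangledState,
      (quantumValue_star_maxEntangledState hφ).symm⟩
    rintro _ ⟨ψ, hψ, ρ, hρ, rfl⟩
    exact quantumValue_le hφ hψ hρ
  calc (N : ℝ) / sMax φ N * sSup ZE = N * sSup ZE / sMax φ N := div_mul_eq_mul_div _ _ _
    -- This also covers `sMax φ N = 0`, where the quotient is the junk value `0`.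
    _ ≤ N := div_le_of_le_mul₀ (sMax_nonneg φ N) N.cast_nonneg (by gcongr)
    _ ≤ sSup ZQ := hQ
end
end

section
/- Let p, q, r, w ∈ ℝ^n have all entries nonnegative, and suppose p is weakly submajorized by r and q is weakly submajorized by w. Then Σ_{i=1}^n p_i q_i ≤ Σ_{i=1}^n r↓_i w↓_i, where v↓ denotes the decreasing rearrangement of v. -/
noncomputable section

/-- The decreasing rearrangement of a real vector. -/
def dSort {n : ℕ} (v : Fin n → ℝ) : Fin n → ℝ := fun i => v (Tuple.sort v i.rev)

/-- The sum of the `k` largest entries of a real vector. -/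
def topSum {n : ℕ} (v : Fin n → ℝ) (k : ℕ) : ℝ :=
  ∑ i ∈ Finset.univ.filter (fun i : Fin n => (i : ℕ) < k), dSort v i

/-!
Write `v↓` for `dSort v`. The rearrangement inequality gives `∑ pᵢ qᵢ ≤ ∑ p↓ᵢ q↓ᵢ`.
By Abel summation, pairing with a nonnegative nonincreasing vector is monotone in the partial sums
of the other factor. Applied with weights `q↓` and then `r↓`, this gives
`∑ p↓ᵢ q↓ᵢ ≤ ∑ r↓ᵢ q↓ᵢ ≤ ∑ r↓ᵢ w↓ᵢ`.
-/

section PartialSums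

variable {ι R M : Type*} [LinearOrder ι] [Ring R] [PartialOrder R] [IsOrderedAddMonoid R]
  [AddCommGroup M] [PartialOrder M] [IsOrderedAddMonoid M] [Module R M] [PosSMulMono R M]
  {s : Finset ι} {c : ι → R} {a b : ι → M}

theorem sum_smul_nonneg_of_antitoneOn (hc : AntitoneOn c s) (hc₀ : ∀ i ∈ s, 0 ≤ c i)
    (ha : ∀ k ∈ s, 0 ≤ ∑ i ∈ s with i ≤ k, a i) : 0 ≤ ∑ i ∈ s, c i • a i := by
  induction s using Finset.induction_on_max generalizing c with
  | empty => simp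
  | insert m s hm ih =>
    have hms : m ∉ s := fun h => (hm m h).false
    have total_nonneg : 0 ≤ ∑ i ∈ insert m s, a i := by
      have h := ha m (s.mem_insert_self m)
      rwa [Finset.filter_true_of_mem] at h
      simpa using fun i hi => (hm i hi).le
    have partial_nonneg : ∀ k ∈ s, 0 ≤ ∑ i ∈ s with i ≤ k, a i := fun k hk => by
      have h := ha k (Finset.mem_insert_of_mem hk)
      rwa [Finset.filter_insert, if_neg (hm k hk).not_ge] at h
    -- Subtracting the smallest weight `c m` keeps the weights on `s` nonincreasing and nonnegative.
    have shifted_nonneg : 0 ≤ ∑ i ∈ s, (c i - c m) • a i := by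
      refine ih (fun i hi j hj hij => ?_) (fun i hi => ?_) partial_nonneg
      · exact sub_le_sub_right
          (hc (Finset.mem_insert_of_mem hi) (Finset.mem_insert_of_mem hj) hij) _
      · exact sub_nonneg.2
          (hc (Finset.mem_insert_of_mem hi) (s.mem_insert_self m) (hm i hi).le)
    calc
      0 ≤ ∑ i ∈ s, (c i - c m) • a i + c m • ∑ i ∈ insert m s, a i :=
        add_nonneg shifted_nonneg (smul_nonneg (hc₀ m (s.mem_insert_self m)) total_nonneg)
      _ = ∑ i ∈ insert m s, c i • a i := by
        simp only [Finset.sum_insert hms, sub_smul, Finset.sum_sub_distrib, smul_add,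
          ← Finset.smul_sum]
        abel

theorem sum_smul_le_sum_smul_of_antitoneOn (hc : AntitoneOn c s) (hc₀ : ∀ i ∈ s, 0 ≤ c i)
    (hab : ∀ k ∈ s, ∑ i ∈ s with i ≤ k, a i ≤ ∑ i ∈ s with i ≤ k, b i) :
    ∑ i ∈ s, c i • a i ≤ ∑ i ∈ s, c i • b i := by
  have h : 0 ≤ ∑ i ∈ s, c i • (b i - a i) :=
    sum_smul_nonneg_of_antitoneOn hc hc₀ fun k hk => by
      simpa only [Finset.sum_sub_distrib, sub_nonneg] using hab k hk
  simpa only [smul_sub, Finset.sum_sub_distrib, sub_nonneg] using h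

end PartialSums

section DecreasingRearrangement

variable {n : ℕ}

theorem dSort_antitone (v : Fin n → ℝ) : Antitone (dSort v) :=
  fun _ _ hij => Tuple.monotone_sort v (Fin.rev_le_rev.2 hij)

theorem exists_perm_dSort_eq_comp (v : Fin n → ℝ) : ∃ σ : Equiv.Perm (Fin n), dSort v = v ∘ σ :=
  ⟨Fin.revPerm.trans (Tuple.sort v), rfl⟩

theorem sum_mul_le_sum_dSort_mul_dSort (p q : Fin n → ℝ) :
    ∑ i, p i * q i ≤ ∑ i, dSort p i * dSort q i := by
  obtain ⟨σ, hσ⟩ := exists_perm_dSort_eq_comp p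
  obtain ⟨τ, hτ⟩ := exists_perm_dSort_eq_comp q
  calc
    ∑ i, p i * q i = ∑ i, p (σ i) * q (σ i) := (Equiv.sum_comp σ fun i => p i * q i).symm
    _ = ∑ i, dSort p i * dSort q (τ.symm (σ i)) := by simp [hσ, hτ]
    _ ≤ ∑ i, dSort p i * dSort q i :=
      ((dSort_antitone p).monovary (dSort_antitone q)).sum_mul_comp_perm_le_sum_mul
        (σ := σ.trans τ.symm)

theorem sum_mul_dSort_le_sum_mul_dSort {a b c : Fin n → ℝ} (hc : Antitone c) (hc₀ : ∀ i, 0 ≤ c i)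
    (hab : ∀ k, 1 ≤ k → k ≤ n → topSum a k ≤ topSum b k) :
    ∑ i, c i * dSort a i ≤ ∑ i, c i * dSort b i :=
  sum_smul_le_sum_smul_of_antitoneOn (hc.antitoneOn _) (fun i _ => hc₀ i) fun k _ => by
    simpa only [topSum, Nat.lt_succ_iff, Fin.val_fin_le] using hab (k + 1) (by omega) k.isLt

end DecreasingRearrangement

theorem inner_le_of_weakSubmajorize_pair_general
    (n : ℕ) (p q r w : Fin n → ℝ) (hq : ∀ i, 0 ≤ q i) (hr : ∀ i, 0 ≤ r i)
    (hpr : ∀ k, 1 ≤ k → k ≤ n → topSum p k ≤ topSum r k)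
    (hqw : ∀ k, 1 ≤ k → k ≤ n → topSum q k ≤ topSum w k) :
    ∑ i, p i * q i ≤ ∑ i, dSort r i * dSort w i :=
  calc
    ∑ i, p i * q i ≤ ∑ i, dSort p i * dSort q i := sum_mul_le_sum_dSort_mul_dSort p q
    _ = ∑ i, dSort q i * dSort p i := by simp only [mul_comm]
    _ ≤ ∑ i, dSort q i * dSort r i :=
      sum_mul_dSort_le_sum_mul_dSort (dSort_antitone q) (fun _ => hq _) hpr
    _ = ∑ i, dSort r i * dSort q i := by simp only [mul_comm]
    _ ≤ ∑ i, dSort r i * dSort w i :=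
      sum_mul_dSort_le_sum_mul_dSort (dSort_antitone r) (fun _ => hr _) hqw

/-- **Double majorization inequality.** If `p` is weakly submajorized by `r` and `q` is
weakly submajorized by `w`, then `Σ pᵢ qᵢ ≤ Σ r↓ᵢ w↓ᵢ` for nonnegative vectors. -/
theorem inner_le_of_weakSubmajorize_pair
    (n : ℕ) (p q r w : Fin n → ℝ)
    (hp : ∀ i, 0 ≤ p i) (hq : ∀ i, 0 ≤ q i)
    (hr : ∀ i, 0 ≤ r i) (hw : ∀ i, 0 ≤ w i)
    (hpr : ∀ k, 1 ≤ k → k ≤ n → topSum p k ≤ topSum r k)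
    (hqw : ∀ k, 1 ≤ k → k ≤ n → topSum q k ≤ topSum w k) :
    ∑ i, p i * q i ≤ ∑ i, dSort r i * dSort w i :=
  inner_le_of_weakSubmajorize_pair_general n p q r w hq hr hpr hqw
end
end

section
/- Let e_0 = (1,0), e_1 = (0,1) and x_± = (e_0 ± e_1)/√2 in ℂ², and define the qubit projectors P_1^+ := |e_0⟩⟨e_0|, P_1^− := |e_1⟩⟨e_1|, P_2^+ := |x_+⟩⟨x_+|, P_2^− := |x_−⟩⟨x_−| (Alice) and Q_1^+ := |e_1⟩⟨e_1|, Q_1^− := |e_0⟩⟨e_0|, Q_2^+ := |x_−⟩⟨x_−|, Q_2^− := |x_+⟩⟨x_+| (Bob). Then: (1) for every finite set Λ, weights p(λ) ≥ 0 with Σ_λ p(λ) = 1, and 2×2 density matrices ρ_λ^A, ρ_λ^B, the 4×4 density matrix ρ := Σ_λ p(λ) ρ_λ^A ⊗ ρ_λ^B satisfies Σ_{x∈{1,2}} Σ_{a∈{+,−}} Tr((P_x^a ⊗ Q_x^a) ρ) ≤ 3 − √2; (2) the two-qubit Werner state ρ_w := p|φ^−⟩⟨φ^−| + (1−p)·I₄/4,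 with φ^− := (e_0 ⊗ e_1 − e_1 ⊗ e_0)/√2, satisfies Σ_{x,a} Tr((P_x^a ⊗ Q_x^a) ρ_w) = 1 + p; consequently, for p > 2 − √2 the Werner state ρ_w admits no decomposition ρ_w = Σ_λ p(λ) ρ_λ^A ⊗ ρ_λ^B, i.e., it is entangled. -/
/-!
Each `P ⊗ Q` projects onto anticorrelated outcomes, so the functional is the expectation value of
`1 - (σ_z ⊗ σ_z + σ_x ⊗ σ_x) / 2`. On a product state `σ_z ⊗ σ_z + σ_x ⊗ σ_x` has as expectation
value the inner product of the vectors `(⟨σ_z⟩, ⟨σ_x⟩)` of the two parties. Both vectors lie in the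
unit disc: if `A` and `B` anticommute and square to `1`, then `C = ⟨A⟩ A + ⟨B⟩ B` satisfies
`⟨C⟩ = ⟨A⟩² + ⟨B⟩²` and `C² = (⟨A⟩² + ⟨B⟩²) 1`, so `⟨C⟩² ≤ ⟨C²⟩` gives `⟨A⟩² + ⟨B⟩² ≤ 1`. Hence
the functional is at most `3 / 2 ≤ 3 - √2` on product states, and on separable states by convexity.
The singlet is an eigenvector of every `A ⊗ A`, with eigenvalue `det A`, whence the value `1 + p` on
Werner states.
-/

open scoped ComplexOrder

noncomputable section

def e0 : Fin 2 → ℂ := ![1, 0]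
def e1 : Fin 2 → ℂ := ![0, 1]
def xPlus : Fin 2 → ℂ := fun i => (e0 i + e1 i) / (Real.sqrt 2 : ℂ)
def xMinus : Fin 2 → ℂ := fun i => (e0 i - e1 i) / (Real.sqrt 2 : ℂ)

/-- Alice's projectors: setting `0` is `{|e0⟩⟨e0|, |e1⟩⟨e1|}`, setting `1` is
`{|x₊⟩⟨x₊|, |x₋⟩⟨x₋|}`; `true` is outcome `+`, `false` is outcome `−`. -/
def Aproj : Fin 2 → Bool → Matrix (Fin 2) (Fin 2) ℂ
  | 0, true  => rankOneProj e0
  | 0, false => rankOneProj e1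
  | 1, true  => rankOneProj xPlus
  | 1, false => rankOneProj xMinus

/-- Bob's projectors: setting `0` is `{|e1⟩⟨e1|, |e0⟩⟨e0|}`, setting `1` is
`{|x₋⟩⟨x₋|, |x₊⟩⟨x₊|}`. -/
def Bproj : Fin 2 → Bool → Matrix (Fin 2) (Fin 2) ℂ
  | 0, true  => rankOneProj e1
  | 0, false => rankOneProj e0
  | 1, true  => rankOneProj xMinus
  | 1, false => rankOneProj xPlus

/-- The singlet state vector `φ⁻ = (e0 ⊗ e1 − e1 ⊗ e0)/√2`. -/
def phiMinus : Fin 2 × Fin 2 → ℂ :=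
  fun q => (e0 q.1 * e1 q.2 - e1 q.1 * e0 q.2) / (Real.sqrt 2 : ℂ)

/-- The two-qubit Werner state `ρ_w = p|φ⁻⟩⟨φ⁻| + (1−p)·I₄/4`. -/
def wernerState (p : ℝ) : Matrix (Fin 2 × Fin 2) (Fin 2 × Fin 2) ℂ :=
  (p : ℂ) • rankOneProj phiMinus + (((1 - p) / 4 : ℝ) : ℂ) • 1

/-- The entanglement functional `Σ_{x,a} Tr((P_x^a ⊗ Q_x^a) ρ)`. -/
def entFunctional (ρ : Matrix (Fin 2 × Fin 2) (Fin 2 × Fin 2) ℂ) : ℝ :=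
  ∑ x : Fin 2, ∑ a : Bool,
    (Matrix.trace (Matrix.kroneckerMap (· * ·) (Aproj x a) (Bproj x a) * ρ)).re

open Matrix
open scoped Kronecker

section Expectation

variable {m n : Type*} [Fintype m] [Fintype n]

/-- The expectation value `Re Tr(A ρ)` of an observable `A` in a state `ρ`. The real part makes it a
real bilinear form on all matrices; for Hermitian `A` and `ρ` nothing is lost. -/
def expectation : Matrix n n ℂ →ₗ[ℝ] Matrix n n ℂ →ₗ[ℝ] ℝ :=
  (LinearMap.mul ℝ (Matrix n n ℂ)).compr₂ (Complex.reLm ∘ₗ traceLinearMap n ℝ ℂ)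

lemma expectation_apply (A ρ : Matrix n n ℂ) : expectation A ρ = (A * ρ).trace.re := rfl

lemma expectation_one_right [DecidableEq n] (A : Matrix n n ℂ) :
    expectation A 1 = A.trace.re := by
  rw [expectation_apply, mul_one]

lemma trace_mul_im_eq_zero {A ρ : Matrix n n ℂ} (hA : A.IsHermitian) (hρ : ρ.IsHermitian) :
    (A * ρ).trace.im = 0 := by
  rw [← Complex.conj_eq_iff_im, starRingEnd_apply, ← trace_conjTranspose, conjTranspose_mul,
    hA.eq, hρ.eq, trace_mul_comm]

lemma expectation_kronecker {A ρ : Matrix m m ℂ} (hA : A.IsHermitian) (hρ : ρ.IsHermitian)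
    (B σ : Matrix n n ℂ) :
    expectation (A ⊗ₖ B) (ρ ⊗ₖ σ) = expectation A ρ * expectation B σ := by
  simp only [expectation_apply, ← mul_kronecker_mul, trace_kronecker, Complex.mul_re,
    trace_mul_im_eq_zero hA hρ, zero_mul, sub_zero]

lemma expectation_rankOneProj_of_mulVec {A : Matrix n n ℂ} {v : n → ℂ} {c : ℂ}
    (hv : A *ᵥ v = c • v) (hv1 : (rankOneProj v).trace = 1) :
    expectation A (rankOneProj v) = c.re := by
  rw [expectation_apply, rankOneProj, mul_vecMulVec, hv, smul_vecMulVec, trace_smul,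
    ← rankOneProj, hv1, smul_eq_mul, mul_one]

variable [DecidableEq n] {ρ : Matrix n n ℂ}

lemma IsDensityMatrix.expectation_one (hρ : IsDensityMatrix ρ) : expectation 1 ρ = 1 := by
  rw [expectation_apply, one_mul, hρ.2, Complex.one_re]

lemma IsDensityMatrix.expectation_mul_self_nonneg (hρ : IsDensityMatrix ρ) {C : Matrix n n ℂ}
    (hC : C.IsHermitian) : 0 ≤ expectation (C * C) ρ := by
  have hpos : 0 ≤ (C * ρ * Cᴴ).trace := (hρ.1.mul_mul_conjTranspose_same C).trace_nonneg
  rw [hC.eq, trace_mul_comm, ← mul_assoc] at hpos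
  exact (Complex.le_def.1 hpos).1

lemma IsDensityMatrix.expectation_sq_le (hρ : IsDensityMatrix ρ) {C : Matrix n n ℂ}
    (hC : C.IsHermitian) : expectation C ρ ^ 2 ≤ expectation (C * C) ρ := by
  set t := expectation C ρ with ht
  have hD : (C - t • (1 : Matrix n n ℂ)).IsHermitian :=
    hC.sub (isHermitian_one.smul (IsSelfAdjoint.all t))
  have hsq : (C - t • (1 : Matrix n n ℂ)) * (C - t • (1 : Matrix n n ℂ))
      = C * C - (2 * t) • C + t ^ 2 • (1 : Matrix n n ℂ) := by
    simp only [sub_mul, mul_sub, smul_mul_assoc, mul_smul_comm, one_mul, mul_one]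
    module
  have hvar := hρ.expectation_mul_self_nonneg hD
  simp only [hsq, map_add, map_sub, map_smul, LinearMap.add_apply, LinearMap.sub_apply,
    LinearMap.smul_apply, smul_eq_mul, hρ.expectation_one, ← ht] at hvar
  linarith

end Expectation

/-- A pair of anticommuting dichotomic observables: Hermitian matrices that square to `1`. -/
structure IsAnticommutingPair {n : Type*} [Fintype n] [DecidableEq n] (A B : Matrix n n ℂ) :
    Prop where
  isHermitian_left : A.IsHermitian
  isHermitian_right : B.IsHermitian
  left_mul_self : A * A = 1
  right_mul_self : B * B = 1
  anticommute : A * B + B * A = 0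

namespace IsAnticommutingPair

variable {m n : Type*} [Fintype m] [DecidableEq m] [Fintype n] [DecidableEq n]

lemma combination_mul_self {A B : Matrix n n ℂ} (h : IsAnticommutingPair A B) (a b : ℝ) :
    (a • A + b • B) * (a • A + b • B) = (a ^ 2 + b ^ 2) • (1 : Matrix n n ℂ) := by
  calc (a • A + b • B) * (a • A + b • B)
      = a ^ 2 • (A * A) + b ^ 2 • (B * B) + (a * b) • (A * B + B * A) := by
        simp only [add_mul, mul_add, smul_mul_assoc, mul_smul_comm]
        module
    _ = (a ^ 2 + b ^ 2) • (1 : Matrix n n ℂ) := by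
        rw [h.left_mul_self, h.right_mul_self, h.anticommute, smul_zero, add_zero, ← add_smul]

lemma expectation_sq_add_sq_le_one {A B ρ : Matrix n n ℂ} (h : IsAnticommutingPair A B)
    (hρ : IsDensityMatrix ρ) : expectation A ρ ^ 2 + expectation B ρ ^ 2 ≤ 1 := by
  set a := expectation A ρ with ha
  set b := expectation B ρ with hb
  have hC : (a • A + b • B).IsHermitian :=
    (h.isHermitian_left.smul (IsSelfAdjoint.all a)).add
      (h.isHermitian_right.smul (IsSelfAdjoint.all b))
  have hvar : (a ^ 2 + b ^ 2) ^ 2 ≤ a ^ 2 + b ^ 2 := by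
    have hsq := hρ.expectation_sq_le hC
    simpa only [h.combination_mul_self, map_add, map_smul, LinearMap.add_apply,
      LinearMap.smul_apply, smul_eq_mul, hρ.expectation_one, ← ha, ← hb, ← sq, mul_one] using hsq
  nlinarith

lemma neg_one_le_expectation_kronecker {A₁ A₂ ρ : Matrix m m ℂ} {B₁ B₂ σ : Matrix n n ℂ}
    (hA : IsAnticommutingPair A₁ A₂) (hB : IsAnticommutingPair B₁ B₂)
    (hρ : IsDensityMatrix ρ) (hσ : IsDensityMatrix σ) :
    -1 ≤ expectation (A₁ ⊗ₖ B₁ + A₂ ⊗ₖ B₂) (ρ ⊗ₖ σ) := by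
  have hdiscA := hA.expectation_sq_add_sq_le_one hρ
  have hdiscB := hB.expectation_sq_add_sq_le_one hσ
  rw [map_add, LinearMap.add_apply, expectation_kronecker hA.isHermitian_left hρ.1.isHermitian,
    expectation_kronecker hA.isHermitian_right hρ.1.isHermitian]
  nlinarith [sq_nonneg (expectation A₁ ρ + expectation B₁ σ),
    sq_nonneg (expectation A₂ ρ + expectation B₂ σ)]

end IsAnticommutingPair

section Separable

variable {m n : Type*} [Fintype m] [DecidableEq m] [Fintype n] [DecidableEq n]

variable (m n) in
/-- The product states `ρ ⊗ σ` of a bipartite system. -/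
def productStates : Set (Matrix (m × n) (m × n) ℂ) :=
  {τ | ∃ ρ σ, IsDensityMatrix ρ ∧ IsDensityMatrix σ ∧ τ = ρ ⊗ₖ σ}

variable (m n) in
/-- The separable states of a bipartite system: the finite convex combinations of product states.
The states outside this set are the entangled ones. -/
def separableStates : Set (Matrix (m × n) (m × n) ℂ) :=
  convexHull ℝ (productStates m n)

lemma sum_smul_kronecker_mem_separableStates {Λ : Type*} [Fintype Λ] {w : Λ → ℝ}
    {ρA : Λ → Matrix m m ℂ} {ρB : Λ → Matrix n n ℂ} (hw : ∀ l, 0 ≤ w l) (hw1 : ∑ l, w l = 1)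
    (hA : ∀ l, IsDensityMatrix (ρA l)) (hB : ∀ l, IsDensityMatrix (ρB l)) :
    ∑ l, (w l : ℂ) • (ρA l ⊗ₖ ρB l) ∈ separableStates m n := by
  simp only [Complex.coe_smul]
  exact (convex_convexHull ℝ _).sum_mem (fun l _ => hw l) hw1
    fun l _ => subset_convexHull ℝ _ ⟨ρA l, ρB l, hA l, hB l, rfl⟩

lemma IsAnticommutingPair.neg_one_le_expectation_of_mem_separableStates {A₁ A₂ : Matrix m m ℂ}
    {B₁ B₂ : Matrix n n ℂ} (hA : IsAnticommutingPair A₁ A₂) (hB : IsAnticommutingPair B₁ B₂)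
    {ρ : Matrix (m × n) (m × n) ℂ} (hρ : ρ ∈ separableStates m n) :
    -1 ≤ expectation (A₁ ⊗ₖ B₁ + A₂ ⊗ₖ B₂) ρ := by
  refine convexHull_min ?_ (convex_halfSpace_ge (expectation _).isLinear (-1)) hρ
  rintro _ ⟨ρ, σ, hρ, hσ, rfl⟩
  exact hA.neg_one_le_expectation_kronecker hB hρ hσ

lemma expectation_one_of_mem_separableStates {ρ : Matrix (m × n) (m × n) ℂ}
    (hρ : ρ ∈ separableStates m n) : expectation 1 ρ = 1 := by
  refine convexHull_min ?_ (convex_hyperplane (expectation 1).isLinear 1) hρ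
  rintro _ ⟨ρ, σ, hρ, hσ, rfl⟩
  rw [Set.mem_ofPred_eq, ← one_kronecker_one, expectation_kronecker isHermitian_one
    hρ.1.isHermitian, hρ.expectation_one, hσ.expectation_one, one_mul]

end Separable

/-- The Pauli matrix `σ_z`. -/
def pauliZ : Matrix (Fin 2) (Fin 2) ℂ := !![1, 0; 0, -1]

/-- The Pauli matrix `σ_x`. -/
def pauliX : Matrix (Fin 2) (Fin 2) ℂ := !![0, 1; 1, 0]

lemma isAnticommutingPair_pauliZ_pauliX : IsAnticommutingPair pauliZ pauliX where
  isHermitian_left := by ext i j; fin_cases i <;> fin_cases j <;> simp [pauliZ]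
  isHermitian_right := by ext i j; fin_cases i <;> fin_cases j <;> simp [pauliX]
  left_mul_self := by simp [pauliZ, one_fin_two]
  right_mul_self := by simp [pauliX, one_fin_two]
  anticommute := by ext i j; fin_cases i <;> fin_cases j <;> simp [pauliZ, pauliX]

lemma rankOneProj_div_sqrt {n : Type*} [Fintype n] (v : n → ℂ) {r : ℝ} (hr : 0 ≤ r) :
    rankOneProj (fun i => v i / (√r : ℂ)) = r⁻¹ • rankOneProj v := by
  have hsqrt : (√r : ℂ) * √r = r := by rw [← Complex.ofReal_mul, Real.mul_self_sqrt hr]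
  ext i j
  simp only [rankOneProj, vecMulVec_apply, Matrix.smul_apply, Pi.star_apply, star_div₀,
    Complex.star_def, Complex.conj_ofReal, div_mul_div_comm, hsqrt, Complex.real_smul,
    Complex.ofReal_inv]
  rw [div_eq_inv_mul]

lemma rankOneProj_e0 : rankOneProj e0 = (2⁻¹ : ℝ) • (1 + pauliZ) := by
  ext i j; fin_cases i <;> fin_cases j <;> norm_num [rankOneProj, vecMulVec_apply, e0, pauliZ]

lemma rankOneProj_e1 : rankOneProj e1 = (2⁻¹ : ℝ) • (1 - pauliZ) := by
  ext i j; fin_cases i <;> fin_cases j <;> norm_num [rankOneProj, vecMulVec_apply, e1, pauliZ]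

lemma rankOneProj_xPlus : rankOneProj xPlus = (2⁻¹ : ℝ) • (1 + pauliX) := by
  unfold xPlus
  rw [rankOneProj_div_sqrt _ zero_le_two]
  ext i j; fin_cases i <;> fin_cases j <;> simp [rankOneProj, vecMulVec_apply, e0, e1, pauliX]

lemma rankOneProj_xMinus : rankOneProj xMinus = (2⁻¹ : ℝ) • (1 - pauliX) := by
  unfold xMinus
  rw [rankOneProj_div_sqrt _ zero_le_two]
  ext i j; fin_cases i <;> fin_cases j <;> simp [rankOneProj, vecMulVec_apply, e0, e1, pauliX]

/-- For `A` and `B` with eigenvalues `±1`, the left side is the projection onto opposite outcomes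
of a joint measurement. -/
lemma anticorrelation_kronecker {m n : Type*} [DecidableEq m] [DecidableEq n]
    (A : Matrix m m ℂ) (B : Matrix n n ℂ) :
    ((2⁻¹ : ℝ) • (1 + A)) ⊗ₖ ((2⁻¹ : ℝ) • (1 - B)) + ((2⁻¹ : ℝ) • (1 - A)) ⊗ₖ ((2⁻¹ : ℝ) • (1 + B))
      = (2⁻¹ : ℝ) • (1 - A ⊗ₖ B) := by
  simp only [sub_eq_add_neg, ← neg_one_smul ℝ A, ← neg_one_smul ℝ B, smul_kronecker,
    kronecker_smul, add_kronecker, kronecker_add, one_kronecker_one]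
  module

lemma entFunctional_eq_expectation (ρ : Matrix (Fin 2 × Fin 2) (Fin 2 × Fin 2) ℂ) :
    entFunctional ρ
      = expectation 1 ρ - expectation (pauliZ ⊗ₖ pauliZ + pauliX ⊗ₖ pauliX) ρ / 2 := by
  have hsum : entFunctional ρ = expectation
      ((Aproj 0 true ⊗ₖ Bproj 0 true + Aproj 0 false ⊗ₖ Bproj 0 false)
        + (Aproj 1 true ⊗ₖ Bproj 1 true + Aproj 1 false ⊗ₖ Bproj 1 false)) ρ := by
    simp only [entFunctional, Fin.sum_univ_two, Fintype.sum_bool, map_add, LinearMap.add_apply,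
      expectation_apply]
  rw [hsum]
  simp only [Aproj, Bproj, rankOneProj_e0, rankOneProj_e1, rankOneProj_xPlus, rankOneProj_xMinus,
    anticorrelation_kronecker, map_add, map_sub, map_smul, LinearMap.add_apply,
    LinearMap.sub_apply, LinearMap.smul_apply, smul_eq_mul]
  ring

lemma trace_rankOneProj_phiMinus : (rankOneProj phiMinus).trace = 1 := by
  unfold phiMinus
  rw [rankOneProj_div_sqrt _ zero_le_two]
  norm_num [trace, Fintype.sum_prod_type, rankOneProj, vecMulVec_apply, e0, e1]

lemma kronecker_self_mulVec_phiMinus (A : Matrix (Fin 2) (Fin 2) ℂ) :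
    (A ⊗ₖ A) *ᵥ phiMinus = A.det • phiMinus := by
  ext ⟨i, j⟩
  fin_cases i <;> fin_cases j <;>
    simp [mulVec, dotProduct, Fintype.sum_prod_type, phiMinus, e0, e1, det_fin_two] <;> ring

lemma expectation_kronecker_self_wernerState (A : Matrix (Fin 2) (Fin 2) ℂ) (p : ℝ) :
    expectation (A ⊗ₖ A) (wernerState p) = p * A.det.re + (1 - p) / 4 * (A.trace ^ 2).re := by
  simp only [wernerState, Complex.coe_smul, map_add, map_smul, smul_eq_mul, expectation_one_right,
    expectation_rankOneProj_of_mulVec (kronecker_self_mulVec_phiMinus A)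
      trace_rankOneProj_phiMinus, trace_kronecker, sq]

lemma entFunctional_wernerState (p : ℝ) : entFunctional (wernerState p) = 1 + p := by
  have hone : expectation 1 (wernerState p) = 1 := by
    rw [← one_kronecker_one, expectation_kronecker_self_wernerState]
    norm_num
  have hZ : expectation (pauliZ ⊗ₖ pauliZ) (wernerState p) = -p := by
    rw [expectation_kronecker_self_wernerState]
    simp [pauliZ, det_fin_two, trace_fin_two]
  have hX : expectation (pauliX ⊗ₖ pauliX) (wernerState p) = -p := by
    rw [expectation_kronecker_self_wernerState]
    simp [pauliX, det_fin_two, trace_fin_two]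
  rw [entFunctional_eq_expectation, map_add, LinearMap.add_apply, hone, hZ, hX]
  ring

lemma entFunctional_le_of_mem_separableStates {ρ : Matrix (Fin 2 × Fin 2) (Fin 2 × Fin 2) ℂ}
    (hρ : ρ ∈ separableStates (Fin 2) (Fin 2)) : entFunctional ρ ≤ 3 / 2 := by
  have hpauli := isAnticommutingPair_pauliZ_pauliX.neg_one_le_expectation_of_mem_separableStates
    isAnticommutingPair_pauliZ_pauliX hρ
  rw [entFunctional_eq_expectation, expectation_one_of_mem_separableStates hρ]
  linarith

theorem werner_entangled_general :
    (∀ ρ ∈ separableStates (Fin 2) (Fin 2), entFunctional ρ ≤ 3 / 2) ∧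
    (∀ p : ℝ, entFunctional (wernerState p) = 1 + p) ∧
    (∀ p : ℝ, 1 / 2 < p → wernerState p ∉ separableStates (Fin 2) (Fin 2)) := by
  refine ⟨fun _ => entFunctional_le_of_mem_separableStates, entFunctional_wernerState,
    fun p hp hsep => ?_⟩
  have hle := entFunctional_le_of_mem_separableStates hsep
  rw [entFunctional_wernerState] at hle
  linarith

/-- **Entanglement of the two-qubit Werner state for `p > 2 − √2`:**
(1) every separable state satisfies the bound `3 − √2`; (2) the Werner state attains `1 + p`;
consequently, for `p > 2 − √2` the Werner state admits no separable decomposition. -/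
theorem werner_entangled :
    (∀ (Λ : Type) (_ : Fintype Λ) (w : Λ → ℝ)
        (ρA ρB : Λ → Matrix (Fin 2) (Fin 2) ℂ),
      (∀ l, 0 ≤ w l) → (∑ l, w l = 1) →
      (∀ l, IsDensityMatrix (ρA l)) → (∀ l, IsDensityMatrix (ρB l)) →
      entFunctional (∑ l, ((w l : ℝ) : ℂ) • Matrix.kroneckerMap (· * ·) (ρA l) (ρB l))
        ≤ 3 - Real.sqrt 2) ∧
    (∀ p : ℝ, entFunctional (wernerState p) = 1 + p) ∧
    (∀ p : ℝ, 2 - Real.sqrt 2 < p →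
      ¬ ∃ (Λ : Type) (_ : Fintype Λ) (w : Λ → ℝ)
          (ρA ρB : Λ → Matrix (Fin 2) (Fin 2) ℂ),
        (∀ l, 0 ≤ w l) ∧ (∑ l, w l = 1) ∧
        (∀ l, IsDensityMatrix (ρA l)) ∧ (∀ l, IsDensityMatrix (ρB l)) ∧
        wernerState p = ∑ l, ((w l : ℝ) : ℂ) • Matrix.kroneckerMap (· * ·) (ρA l) (ρB l)) := by
  obtain ⟨hbound, hvalue, hentangled⟩ := werner_entangled_general
  have hsqrt : √2 ≤ 3 / 2 := Real.sqrt_le_iff.2 ⟨by norm_num, by norm_num⟩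
  refine ⟨fun Λ _ w ρA ρB hw hw1 hA hB => ?_, hvalue, ?_⟩
  · exact (hbound _ (sum_smul_kronecker_mem_separableStates hw hw1 hA hB)).trans (by linarith)
  · rintro p hp ⟨Λ, _, w, ρA, ρB, hw, hw1, hA, hB, hρ⟩
    exact hentangled p (by linarith) (hρ ▸ sum_smul_kronecker_mem_separableStates hw hw1 hA hB)
end
end
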